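/- For every ε ∈ (0, π) there exists a constant K > 0 such that for every integer q ≥ 1 and every z ∈ ℂ_ε, the q-th complex derivative of S satisfies |S^{(q)}(z)| ≤ (q−1)! · (K/(1 + |z|))^q. -/

import Mathlib

/-!
Write `D = p - (p-1) T`.  The equation for `T` gives `exp S = T / D`, and differentiating this
together with `z T^p - T + 1 = 0` yields the identity `z S'(z) D² = p (T - 1)`
(`mul_deriv_mul_sq`).  For large `|z|` the equation forces `|T| ≤ 1/2`
(`norm_le_half_of_large`), so `|D| ≥ 1` and `S'(z) = O(1/|z|)` near infinity in all of `Ω_p`.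

Let `A_c` be the closed set of points `w` whose distance to each point of the cut is at least
`c (1 + |w|)`.  On its bounded part `S'` is bounded by compactness, so `|S'(w)| ≤ M / (1 + |w|)`
on `A_c` (`exists_deriv_bound`).  A point `z` of the sector is at distance at least
`c₀ (1 + |z|)` from the cut (`sector_dist`), hence the disc of radius `r (1 + |z|)` about `z`
with `r = c₀ / 4` lies in `A_r`.  Cauchy's estimate for the `(q-1)`-st derivative of `S'` on that
disc gives the claim with `K = 2 M + 1 / r`.
-/

/-- `R_p = (p-1)^(p-1) / p^p`. -/
noncomputable def Rp (p : ℕ) : ℝ :=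
  ((p - 1 : ℕ) : ℝ) ^ (p - 1) / (p : ℝ) ^ p

/-- The cut plane `Ω_p = ℂ ∖ [R_p, ∞)`. -/
noncomputable def cutPlane (p : ℕ) : Set ℂ :=
  (Complex.ofReal '' Set.Ici (Rp p))ᶜ

/-- The open sector `ℂ_ε = {z : |arg z| > ε}` (principal argument). -/
def sector (ε : ℝ) : Set ℂ := {z : ℂ | ε < |Complex.arg z|}

lemma Rp_pos {p : ℕ} (hp : 2 ≤ p) : 0 < Rp p := by
  unfold Rp
  have h1 : (0 : ℝ) < ((p - 1 : ℕ) : ℝ) := by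
    exact_mod_cast (by omega : 0 < p - 1)
  have h2 : (0 : ℝ) < (p : ℝ) := by exact_mod_cast (by omega : 0 < p)
  positivity

lemma isOpen_cutPlane (p : ℕ) : IsOpen (cutPlane p) :=
  (Complex.isometry_ofReal.isClosedEmbedding.isClosedMap _ isClosed_Ici).isOpen_compl

/-- The points `w` whose distance to each point of the cut `[R_p, ∞)` is at least
`c (1 + |w|)`. -/
def farSet (p : ℕ) (c : ℝ) : Set ℂ :=
  {w : ℂ | ∀ x : ℝ, Rp p ≤ x → c * (1 + ‖w‖) ≤ ‖w - x‖}

lemma farSet_subset_cutPlane (p : ℕ) {c : ℝ} (hc : 0 < c) : farSet p c ⊆ cutPlane p := by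
  rintro w hw ⟨x, hx, rfl⟩
  have h := hw x hx
  simp only [sub_self, norm_zero] at h
  have : 0 < c * (1 + ‖(x : ℂ)‖) := by positivity
  linarith

lemma isClosed_farSet (p : ℕ) (c : ℝ) : IsClosed (farSet p c) := by
  have : farSet p c = ⋂ x : ℝ, ⋂ _ : Rp p ≤ x, {w : ℂ | c * (1 + ‖w‖) ≤ ‖w - x‖} := by
    ext w; simp [farSet]
  rw [this]
  refine isClosed_iInter fun x => isClosed_iInter fun _ => ?_
  exact isClosed_le (by fun_prop) (by fun_prop)

/-- The law of cosines `|z - x|² = |z|² + x² - 2 |z| x cos (arg z)` bounds the distance from a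
point of the sector to a positive real below by a multiple of `|z| + x`. -/
lemma sector_dist {ε : ℝ} (hε : ε ∈ Set.Ioo 0 Real.pi) {z : ℂ} (hz : z ∈ sector ε) {x : ℝ}
    (hx : 0 ≤ x) : Real.sin (ε / 2) * (‖z‖ + x) ≤ ‖z - x‖ := by
  have hcos : Real.cos (Complex.arg z) ≤ Real.cos ε := by
    rw [← Real.cos_abs (Complex.arg z)]
    exact Real.cos_le_cos_of_nonneg_of_le_pi hε.1.le (Complex.abs_arg_le_pi z) (le_of_lt hz)
  have hre : ‖z‖ * Real.cos (Complex.arg z) = z.re := Complex.norm_mul_cos_arg z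
  have hsq : ‖z - x‖ ^ 2 = ‖z‖ ^ 2 + x ^ 2 - 2 * z.re * x := by
    rw [← Complex.normSq_eq_norm_sq, ← Complex.normSq_eq_norm_sq, Complex.normSq_apply,
      Complex.normSq_apply]
    simp
    ring
  have hs : Real.sin (ε / 2) ^ 2 = (1 - Real.cos ε) / 2 := by
    have h := Real.cos_two_mul (ε / 2)
    rw [mul_div_cancel₀ ε two_ne_zero] at h
    have h' := Real.sin_sq_add_cos_sq (ε / 2)
    linarith
  refine le_of_sq_le_sq ?_ (norm_nonneg _)
  have hle : z.re * x ≤ ‖z‖ * Real.cos ε * x := by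
    rw [← hre]; gcongr
  rw [hsq, mul_pow, hs]
  have h1 : 0 ≤ (1 + Real.cos ε) * (‖z‖ - x) ^ 2 :=
    mul_nonneg (by linarith [Real.neg_one_le_cos ε]) (sq_nonneg _)
  nlinarith

lemma ne_zero_of_eq {p : ℕ} (hp : 2 ≤ p) {z t : ℂ} (h : z * t ^ p - t + 1 = 0) : t ≠ 0 := by
  rintro rfl
  rw [zero_pow (by omega)] at h
  simp at h

lemma norm_le_half_of_large {p : ℕ} {z t : ℂ} (h : z * t ^ p - t + 1 = 0)
    (hp : 2 ≤ p) (hz : (2 : ℝ) ^ (p + 2) ≤ ‖z‖) : ‖t‖ ≤ 1 / 2 := by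
  by_contra! hlt
  have h1 : ‖z‖ * ‖t‖ ^ p ≤ ‖t‖ + 1 := by
    have : z * t ^ p = t - 1 := by linear_combination h
    rw [← norm_pow, ← norm_mul, this]
    simpa using norm_sub_le t 1
  -- With `|t| = u / 2`, `u > 1`, the left side is at least `4 u ^ p ≥ 4 u = 8 |t|`.
  have h2 : (2 * ‖t‖) ≤ (2 * ‖t‖) ^ p := le_self_pow₀ (by linarith) (by omega)
  have h3 : (2 : ℝ) ^ (p + 2) * ‖t‖ ^ p ≤ ‖z‖ * ‖t‖ ^ p := by gcongr
  have h4 : (2 : ℝ) ^ (p + 2) * ‖t‖ ^ p = 4 * (2 * ‖t‖) ^ p := by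
    rw [mul_pow, pow_add]; ring
  linarith

/-- The identity `z S' D² = p (T - 1)` with `D = p - (p-1) T`, obtained by differentiating
`exp S · D = T` and the equation of `T`. -/
lemma mul_deriv_mul_sq {p : ℕ} (hp : 2 ≤ p) {T S : ℂ → ℂ}
    (hT : AnalyticOnNhd ℂ T (cutPlane p))
    (heq : ∀ z ∈ cutPlane p, z * T z ^ p - T z + 1 = 0)
    (hne : ∀ z ∈ cutPlane p, 1 - (p : ℂ) * z * T z ^ (p - 1) ≠ 0)
    (hS : AnalyticOnNhd ℂ S (cutPlane p))
    (hSF : ∀ z ∈ cutPlane p,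
      Complex.exp (S z) = (1 - (p : ℂ) * z * T z ^ (p - 1))⁻¹)
    {z : ℂ} (hz : z ∈ cutPlane p) :
    z * deriv S z * ((p : ℂ) - (p - 1) * T z) ^ 2 = p * (T z - 1) := by
  have hnhds := (isOpen_cutPlane p).mem_nhds hz
  have hpow : ∀ w, T w ^ p = T w ^ (p - 1) * T w := fun w => by
    rw [← pow_succ]; congr 1; omega
  have hGT : ∀ w ∈ cutPlane p,
      (1 - (p : ℂ) * w * T w ^ (p - 1)) * T w = p - (p - 1) * T w := fun w hw => by
    have h := heq w hw
    rw [hpow] at h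
    linear_combination (-(p : ℂ)) * h
  have hexp : ∀ w ∈ cutPlane p, Complex.exp (S w) * (p - (p - 1) * T w) - T w = 0 :=
    fun w hw => by
      rw [← hGT w hw, hSF w hw, inv_mul_cancel_left₀ (hne w hw), sub_self]
  have dT := (hT z hz).differentiableAt.hasDerivAt
  have dS := (hS z hz).differentiableAt.hasDerivAt
  have e1 : 1 * T z ^ p + z * (p * T z ^ (p - 1) * deriv T z) - deriv T z = 0 := by
    have d := (((hasDerivAt_id z).mul (dT.pow p)).sub dT).add_const 1
    refine d.unique ((hasDerivAt_const z (0 : ℂ)).congr_of_eventuallyEq ?_)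
    filter_upwards [hnhds] with w hw using heq w hw
  have e2 : Complex.exp (S z) * deriv S z * (p - (p - 1) * T z)
      + Complex.exp (S z) * (-((p - 1) * deriv T z)) - deriv T z = 0 := by
    have d := (dS.cexp.mul ((dT.const_mul ((p : ℂ) - 1)).const_sub (p : ℂ))).sub dT
    refine d.unique ((hasDerivAt_const z (0 : ℂ)).congr_of_eventuallyEq ?_)
    filter_upwards [hnhds] with w hw using hexp w hw
  have hT0 := ne_zero_of_eq hp (heq z hz)
  have hg := hGT z hz
  have hx := hexp z hz
  have hq := heq z hz
  rw [hpow] at e1 hq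
  generalize Complex.exp (S z) = X at *
  generalize deriv S z = s at *
  generalize deriv T z = t' at *
  generalize T z ^ (p - 1) = y at *
  generalize T z = t at *
  generalize (p : ℂ) = P at *
  have f1 : s * t * (P - (P - 1) * t) = P * t' := by
    linear_combination (P - (P - 1) * t) * e2 + (-s * (P - (P - 1) * t) + (P - 1) * t') * hx
  have f2 : z * t' * (P - (P - 1) * t) = (t - 1) * t := by
    rw [← hg]
    linear_combination (-z * t) * e1 + t * hq
  apply mul_right_cancel₀ hT0
  linear_combination z * (P - (P - 1) * t) * f1 + P * f2

lemma exists_deriv_bound {p : ℕ} (hp : 2 ≤ p) {T S : ℂ → ℂ}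
    (hT : AnalyticOnNhd ℂ T (cutPlane p))
    (heq : ∀ z ∈ cutPlane p, z * T z ^ p - T z + 1 = 0)
    (hne : ∀ z ∈ cutPlane p, 1 - (p : ℂ) * z * T z ^ (p - 1) ≠ 0)
    (hS : AnalyticOnNhd ℂ S (cutPlane p))
    (hSF : ∀ z ∈ cutPlane p,
      Complex.exp (S z) = (1 - (p : ℂ) * z * T z ^ (p - 1))⁻¹)
    {c : ℝ} (hc : 0 < c) :
    ∃ M : ℝ, 0 < M ∧ ∀ w ∈ farSet p c, ‖deriv S w‖ ≤ M / (1 + ‖w‖) := by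
  have hsub := farSet_subset_cutPlane p hc
  have hcomp : IsCompact (farSet p c ∩ Metric.closedBall 0 ((2 : ℝ) ^ (p + 2))) :=
    (isCompact_closedBall _ _).inter_left (isClosed_farSet p c)
  obtain ⟨C, hC⟩ := hcomp.exists_bound_of_continuousOn (f := deriv S)
    (hS.deriv.continuousOn.mono (Set.inter_subset_left.trans hsub))
  have hp' : (2 : ℝ) ≤ p := by exact_mod_cast hp
  refine ⟨max (|C| * (1 + 2 ^ (p + 2))) (4 * p), lt_max_of_lt_right (by linarith), ?_⟩
  intro w hw
  have hw0 := norm_nonneg w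
  rw [le_div_iff₀ (by linarith)]
  rcases le_total ‖w‖ ((2 : ℝ) ^ (p + 2)) with hle | hge
  · refine le_max_of_le_left ?_
    have := (hC w ⟨hw, by simpa using hle⟩).trans (le_abs_self C)
    gcongr
  · refine le_max_of_le_right ?_
    have hΩ := hsub hw
    have hhalf := norm_le_half_of_large (heq w hΩ) hp hge
    have hid := congrArg norm (mul_deriv_mul_sq hp hT heq hne hS hSF hΩ)
    rw [norm_mul, norm_mul, norm_mul, norm_pow, Complex.norm_natCast] at hid
    have hD : 1 ≤ ‖(p : ℂ) - (p - 1) * T w‖ := by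
      have h1 := norm_sub_norm_le (p : ℂ) ((p - 1) * T w)
      have h2 : ‖(p : ℂ) - 1‖ = p - 1 := by
        have : (p : ℂ) - 1 = ((p - 1 : ℝ) : ℂ) := by push_cast; rfl
        rw [this, Complex.norm_real, Real.norm_of_nonneg (by linarith)]
      rw [norm_mul, h2, Complex.norm_natCast] at h1
      nlinarith
    have hD2 : 1 ≤ ‖(p : ℂ) - (p - 1) * T w‖ ^ 2 := one_le_pow₀ hD
    have hT1 : ‖T w - 1‖ ≤ 2 := by
      have := norm_sub_le (T w) 1
      rw [norm_one] at this
      linarith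
    have hw1 : 1 ≤ ‖w‖ := (one_le_pow₀ (by norm_num)).trans hge
    have h3 : ‖w‖ * ‖deriv S w‖ ≤ p * 2 :=
      calc ‖w‖ * ‖deriv S w‖ ≤ ‖w‖ * ‖deriv S w‖ * ‖(p : ℂ) - (p - 1) * T w‖ ^ 2 :=
            le_mul_of_one_le_right (by positivity) hD2
        _ = p * ‖T w - 1‖ := hid
        _ ≤ p * 2 := by gcongr
    nlinarith [norm_nonneg (deriv S w)]

/-- The disc of radius `r (1 + |z|)` about a point `z` of `farSet p (4 r)` lies in
`farSet p r`. -/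
lemma closedBall_subset_farSet {p : ℕ} {r : ℝ} (hr : 0 < r) (hr1 : r ≤ 1 / 2) {z : ℂ}
    (hz : z ∈ farSet p (4 * r)) :
    Metric.closedBall z (r * (1 + ‖z‖)) ⊆ farSet p r := by
  intro w hw x hx
  rw [mem_closedBall_iff_norm] at hw
  have h1 := hz x hx
  have h2 : ‖z - x‖ ≤ ‖w - z‖ + ‖w - x‖ := by
    have := norm_sub_le (w - x) (w - z)
    rw [show w - x - (w - z) = z - x by ring] at this
    linarith
  have h3 : ‖w‖ ≤ ‖z‖ + ‖w - z‖ := by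
    simpa using norm_add_le z (w - z)
  have hz0 := norm_nonneg z
  -- `1 + |w| ≤ (1 + r) (1 + |z|) ≤ 2 (1 + |z|)`, while `|w - x| ≥ 3 r (1 + |z|)`.
  have h4 : 1 + ‖w‖ ≤ 2 * (1 + ‖z‖) := by nlinarith
  have h5 : r * (1 + ‖w‖) ≤ r * (2 * (1 + ‖z‖)) := by gcongr
  nlinarith

/-- Let `T` be analytic on `Ω_p` with `z T(z)^p − T(z) + 1 = 0` and
`1 − p z T(z)^{p−1} ≠ 0` there; set `F(z) = 1/(1 − p z T(z)^{p−1})`, and let `S` be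
analytic on `Ω_p` with `S(0) = 0` and `exp(S(z)) = F(z)` on `Ω_p`.  Then for every
`ε ∈ (0, π)` there is `K > 0` such that for all `q ≥ 1` and `z ∈ ℂ_ε` one has
`|S^{(q)}(z)| ≤ (q−1)! (K/(1 + |z|))^q`. -/
theorem fussCatalan_S_deriv_bounds (p : ℕ) (hp : 2 ≤ p) (T S : ℂ → ℂ)
    (hT : AnalyticOnNhd ℂ T (cutPlane p))
    (heq : ∀ z ∈ cutPlane p, z * T z ^ p - T z + 1 = 0)
    (hne : ∀ z ∈ cutPlane p, 1 - (p : ℂ) * z * T z ^ (p - 1) ≠ 0)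
    (hS : AnalyticOnNhd ℂ S (cutPlane p)) (hS0 : S 0 = 0)
    (hSF : ∀ z ∈ cutPlane p,
      Complex.exp (S z) = (1 - (p : ℂ) * z * T z ^ (p - 1))⁻¹)
    (ε : ℝ) (hε : ε ∈ Set.Ioo 0 Real.pi) :
    ∃ K : ℝ, 0 < K ∧ ∀ q : ℕ, 1 ≤ q → ∀ z ∈ sector ε,
      ‖iteratedDeriv q S z‖ ≤ (Nat.factorial (q - 1) : ℝ) * (K / (1 + ‖z‖)) ^ q := by
  have hR := Rp_pos hp
  have hs : 0 < Real.sin (ε / 2) :=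
    Real.sin_pos_of_pos_of_lt_pi (by linarith [hε.1]) (by linarith [hε.2, Real.pi_pos])
  have hs1 := Real.sin_le_one (ε / 2)
  obtain ⟨m, hm, hm1, hmR⟩ : ∃ m : ℝ, 0 < m ∧ m ≤ 1 ∧ m ≤ Rp p :=
    ⟨min 1 (Rp p), lt_min one_pos hR, min_le_left _ _, min_le_right _ _⟩
  set r : ℝ := Real.sin (ε / 2) * m / 4 with hrdef
  have hr : 0 < r := by positivity
  have hr1 : r ≤ 1 / 2 := by
    have : Real.sin (ε / 2) * m ≤ 1 := mul_le_one₀ hs1 hm.le hm1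
    rw [hrdef]; linarith
  have hfar : ∀ z ∈ sector ε, z ∈ farSet p (4 * r) := fun z hz x hx => by
    refine le_trans ?_ (sector_dist hε hz (hR.le.trans hx))
    have hz0 := norm_nonneg z
    rw [show 4 * r * (1 + ‖z‖) = Real.sin (ε / 2) * (m * (1 + ‖z‖)) by rw [hrdef]; ring]
    refine mul_le_mul_of_nonneg_left ?_ hs.le
    nlinarith
  obtain ⟨M, hM, hbound⟩ := exists_deriv_bound hp hT heq hne hS hSF hr
  refine ⟨2 * M + 1 / r, by positivity, ?_⟩
  intro q hq z hz
  obtain ⟨n, rfl⟩ : ∃ n, q = n + 1 := ⟨q - 1, by omega⟩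
  have hz0 := norm_nonneg z
  have hball := closedBall_subset_farSet hr hr1 (hfar z hz)
  have hρ : 0 < r * (1 + ‖z‖) := by positivity
  have hdiff : DiffContOnCl ℂ (deriv S) (Metric.ball z (r * (1 + ‖z‖))) := by
    apply DifferentiableOn.diffContOnCl
    rw [closure_ball z hρ.ne']
    exact hS.deriv.differentiableOn.mono (hball.trans (farSet_subset_cutPlane p hr))
  have hcauchy := Complex.norm_iteratedDeriv_le_of_forall_mem_sphere_norm_le n hρ hdiff
    (C := 2 * M / (1 + ‖z‖)) fun w hw => by
      have hw' := Metric.sphere_subset_closedBall hw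
      refine (hbound w (hball hw')).trans ?_
      -- Since `r ≤ 1/2`, `1 + |w| ≥ (1 + |z|) / 2` on the circle.
      have h1 : ‖z‖ ≤ ‖w‖ + ‖w - z‖ := by
        simpa using norm_sub_le w (w - z)
      rw [mem_closedBall_iff_norm] at hw'
      rw [div_le_div_iff₀ (by positivity) (by positivity)]
      have h2 : 1 + ‖z‖ ≤ 2 * (1 + ‖w‖) := by nlinarith
      nlinarith
  rw [iteratedDeriv_succ', Nat.add_sub_cancel]
  refine hcauchy.trans ?_
  have hK1 : 2 * M ≤ 2 * M + 1 / r := by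
    have : 0 < 1 / r := by positivity
    linarith
  have hK2 : 1 / r ≤ 2 * M + 1 / r := by linarith
  calc (n.factorial : ℝ) * (2 * M / (1 + ‖z‖)) / (r * (1 + ‖z‖)) ^ n
      = n.factorial * ((1 / r / (1 + ‖z‖)) ^ n * (2 * M / (1 + ‖z‖))) := by
        rw [div_div, div_pow 1, one_pow]; ring
    _ ≤ n.factorial * (((2 * M + 1 / r) / (1 + ‖z‖)) ^ n * ((2 * M + 1 / r) / (1 + ‖z‖))) := by
        gcongr
    _ = n.factorial * ((2 * M + 1 / r) / (1 + ‖z‖)) ^ (n + 1) := by rw [pow_succ]
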